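/- Let γ ∈ ℂ and a₊, a₋ ∈ ℂ with Re a₊ > 0 and Re a₋ > 0, and let l ∈ ℂ⁴ satisfy exp(4πiγ) = exp(2πi(l₁+l₂+l₃+l₄+2ia)), where a = (a₊+a₋)/2. Set k_n = −l_n + γ − ia for n = 1,…,4. Then for each δ ∈ {+,−}, the following identity of meromorphic functions of (z,y) ∈ ℂ² holds: f_δ(l;z)·K(γ; z+ia_{−δ}/2, y) + f_δ(l;−z)·K(γ; z−ia_{−δ}/2, y) = f_δ(k;y)·K(γ; z, y+ia_{−δ}/2) + f_δ(k;−y)·K(γ; z, y−ia_{−δ}/2). -/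

import Mathlib

open Complex Filter

noncomputable section

/-- `R_δ(z) = ∏_{k≥1} (1 − q_δ^{2k−1} e^{2iπz})(1 − q_δ^{2k−1} e^{−2iπz})`. -/
def Rfun (qd : ℂ) (z : ℂ) : ℂ :=
  ∏' k : ℕ, ((1 - qd ^ (2 * k + 1) * Complex.exp (2 * Real.pi * I * z)) *
    (1 - qd ^ (2 * k + 1) * Complex.exp (-(2 * Real.pi * I * z))))

/-- The elliptic gamma function
`G(z) = ∏_{m,n≥1} (1 − q₊^{2m−1}q₋^{2n−1}e^{−2iπz})/(1 − q₊^{2m−1}q₋^{2n−1}e^{2iπz})`. -/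
def Gfun (qp qm : ℂ) (z : ℂ) : ℂ :=
  ∏' p : ℕ × ℕ,
    (1 - qp ^ (2 * p.1 + 1) * qm ^ (2 * p.2 + 1) * Complex.exp (-(2 * Real.pi * I * z))) /
    (1 - qp ^ (2 * p.1 + 1) * qm ^ (2 * p.2 + 1) * Complex.exp (2 * Real.pi * I * z))

/-- `a_δ` for `δ ∈ {+,−}` (`true = +`, `false = −`). -/
def aof (ap am : ℂ) (δ : Bool) : ℂ := if δ then ap else am

/-- `f_δ(l;z) = ∏_{n=1}^4 R_δ(z+l_n+ia_{−δ}/4) / R_δ(2z−ia_δ/2)`. -/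
def fδ (ap am : ℂ) (δ : Bool) (l : Fin 4 → ℂ) (z : ℂ) : ℂ :=
  (∏ n : Fin 4, Rfun (Complex.exp (-(Real.pi : ℂ) * aof ap am δ))
      (z + l n + I * aof ap am (!δ) / 4)) /
    Rfun (Complex.exp (-(Real.pi : ℂ) * aof ap am δ)) (2 * z - I * aof ap am δ / 2)

/-- The kernel function `K(γ;z,y) = G(±z±y−γ)`. -/
def Kker (ap am γ z y : ℂ) : ℂ :=
  Gfun (Complex.exp (-(Real.pi : ℂ) * ap)) (Complex.exp (-(Real.pi : ℂ) * am)) (z + y - γ) *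
  Gfun (Complex.exp (-(Real.pi : ℂ) * ap)) (Complex.exp (-(Real.pi : ℂ) * am)) (z - y - γ) *
  Gfun (Complex.exp (-(Real.pi : ℂ) * ap)) (Complex.exp (-(Real.pi : ℂ) * am)) (-z + y - γ) *
  Gfun (Complex.exp (-(Real.pi : ℂ) * ap)) (Complex.exp (-(Real.pi : ℂ) * am)) (-z - y - γ)

/-!
In the coordinates `v = e^{2πiy}`, `w = e^{2πiz}`, the difference equation of the elliptic gamma
function turns each shifted kernel function into a product of theta functions times one common
kernel function, so that what remains is an identity between sums of theta quotients with
parameters `t₀, …, t₃` subject to `∏ tₙ = q² G²`. As functions of `t₀`, with `t₀ t₁` fixed, both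
sides are theta functions of degree two, so they agree as soon as they agree at three points that
are inequivalent modulo `q ^ ℤ`. The points `w`, `w⁻¹` and `q G v` serve: there one term vanishes,
another loses its denominator, and what is left is settled by a second interpolation, in another
pair of parameters, at points where the terms cancel explicitly.
-/

section CanonicalProduct

variable {ι : Type*} {u : ι → ℂ}

/-- The Weierstrass canonical product of genus zero `∏ᵢ (1 - uᵢ w)`, as a function of `w`. -/
def canonicalProd (u : ι → ℂ) (w : ℂ) : ℂ := ∏' i, (1 - u i * w)

lemma multipliable_canonicalProd (hu : Summable fun i => ‖u i‖) (w : ℂ) :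
    Multipliable fun i => 1 - u i * w := by
  simp only [sub_eq_add_neg]
  exact multipliable_one_add_of_summable (by simpa using hu.mul_right ‖w‖)

lemma canonicalProd_eq_zero_iff (hu : Summable fun i => ‖u i‖) {w : ℂ} :
    canonicalProd u w = 0 ↔ ∃ i, u i * w = 1 := by
  constructor
  · contrapose!
    intro h
    simp only [canonicalProd, sub_eq_add_neg]
    refine tprod_one_add_ne_zero_of_summable (fun i => ?_) (by simpa using hu.mul_right ‖w‖)
    rw [← sub_eq_add_neg, sub_ne_zero]
    exact (h i).symm
  · rintro ⟨i, hi⟩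
    exact tprod_of_exists_eq_zero ⟨i, by rw [hi, sub_self]⟩

lemma differentiable_canonicalProd (hu : Summable fun i => ‖u i‖) :
    Differentiable ℂ (canonicalProd u) := by
  intro w
  have hprod : HasProdLocallyUniformlyOn (fun i x => 1 + -(u i * x))
      (fun x => ∏' i, (1 + -(u i * x))) (Metric.ball (0 : ℂ) (‖w‖ + 1)) := by
    refine Summable.hasProdLocallyUniformlyOn_one_add (u := fun i => ‖u i‖ * (‖w‖ + 1))
      Metric.isOpen_ball (hu.mul_right _) (.of_forall fun i x hx => ?_) (fun i => by fun_prop)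
    rw [norm_neg, norm_mul]
    gcongr
    exact (mem_ball_zero_iff.mp hx).le
  have hdiff := hprod.differentiableOn (.of_forall fun s => by fun_prop) Metric.isOpen_ball
  simp only [← sub_eq_add_neg] at hdiff
  exact hdiff.differentiableAt (Metric.isOpen_ball.mem_nhds (by simp))

end CanonicalProduct

section QPochhammer

variable {q w : ℂ}

/-- The infinite `q`-Pochhammer symbol `(w; q)_∞ = ∏_{k ≥ 0} (1 - q ^ k w)`. -/
def qPochhammer (q : ℂ) : ℂ → ℂ := canonicalProd fun k : ℕ => q ^ k

lemma summable_norm_pow (hq : ‖q‖ < 1) : Summable fun k : ℕ => ‖q ^ k‖ := by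
  simpa using summable_geometric_of_lt_one (norm_nonneg q) hq

lemma hasProd_qPochhammer (hq : ‖q‖ < 1) (w : ℂ) :
    HasProd (fun k : ℕ => 1 - q ^ k * w) (qPochhammer q w) :=
  (multipliable_canonicalProd (summable_norm_pow hq) w).hasProd

lemma differentiable_qPochhammer (hq : ‖q‖ < 1) : Differentiable ℂ (qPochhammer q) :=
  differentiable_canonicalProd (summable_norm_pow hq)

lemma qPochhammer_eq_zero_iff (hq : ‖q‖ < 1) : qPochhammer q w = 0 ↔ ∃ k : ℕ, q ^ k * w = 1 :=
  canonicalProd_eq_zero_iff (summable_norm_pow hq)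

lemma qPochhammer_ne_zero_of_norm_lt_one (hq : ‖q‖ < 1) (hw : ‖w‖ < 1) : qPochhammer q w ≠ 0 := by
  rw [Ne, qPochhammer_eq_zero_iff hq]
  rintro ⟨k, hk⟩
  have hnorm : ‖q‖ ^ k * ‖w‖ = 1 := by simpa using congrArg norm hk
  exact (mul_lt_one_of_nonneg_of_lt_one_right (pow_le_one₀ (norm_nonneg q) hq.le)
    (norm_nonneg w) hw).ne hnorm

lemma qPochhammer_eq_one_sub_mul (hq : ‖q‖ < 1) (w : ℂ) :
    qPochhammer q w = (1 - w) * qPochhammer q (q * w) := by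
  have htail : HasProd (fun k : ℕ => 1 - q ^ (k + 1) * w) (qPochhammer q (q * w)) := by
    simpa only [pow_succ, mul_assoc] using hasProd_qPochhammer hq (q * w)
  have hprod := htail.zero_mul (f := fun k : ℕ => 1 - q ^ k * w)
  rw [pow_zero, one_mul] at hprod
  exact (hasProd_qPochhammer hq w).unique hprod

end QPochhammer

lemma apply_zpow_mul_of_apply_mul {G₀ α : Type*} [GroupWithZero G₀] {q : G₀} (hq0 : q ≠ 0)
    {f : G₀ → α} (h : ∀ w ≠ 0, f (q * w) = f w) (k : ℤ) {w : G₀} (hw : w ≠ 0) :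
    f (q ^ k * w) = f w := by
  induction k with
  | zero => rw [zpow_zero, one_mul]
  | succ n ih =>
    rw [← ih, add_comm, zpow_one_add₀ hq0, mul_assoc, h _ (mul_ne_zero (zpow_ne_zero _ hq0) hw)]
  | pred n ih =>
    rw [← ih, ← h _ (mul_ne_zero (zpow_ne_zero _ hq0) hw), ← mul_assoc, ← zpow_one_add₀ hq0,
      add_sub_cancel]

section QTheta

variable {q w : ℂ}

/-- The multiplicative theta function `θ(w) = (w; q)_∞ (q / w; q)_∞`, for `w ≠ 0`. -/
def qTheta (q w : ℂ) : ℂ := qPochhammer q w * qPochhammer q (q / w)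

lemma qTheta_eq_one_sub_mul (hq : ‖q‖ < 1) (w : ℂ) :
    qTheta q w = (1 - w) * (qPochhammer q (q * w) * qPochhammer q (q / w)) := by
  rw [qTheta, qPochhammer_eq_one_sub_mul hq w, mul_assoc]

lemma qTheta_one (hq : ‖q‖ < 1) : qTheta q 1 = 0 := by
  rw [qTheta_eq_one_sub_mul hq, sub_self, zero_mul]

lemma qTheta_q_div (hq0 : q ≠ 0) (w : ℂ) : qTheta q (q / w) = qTheta q w := by
  rw [qTheta, qTheta, div_div_cancel₀ hq0, mul_comm]

lemma qTheta_inv (hq : ‖q‖ < 1) (hw : w ≠ 0) : qTheta q w⁻¹ = -qTheta q w / w := by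
  rw [qTheta_eq_one_sub_mul hq, qTheta_eq_one_sub_mul hq w, div_inv_eq_mul, ← div_eq_mul_inv]
  field_simp
  ring

lemma qTheta_q_mul (hq : ‖q‖ < 1) (hq0 : q ≠ 0) (hw : w ≠ 0) :
    qTheta q (q * w) = -qTheta q w / w := by
  rw [← qTheta_inv hq hw, ← qTheta_q_div hq0 w⁻¹, div_inv_eq_mul]

lemma differentiableAt_qTheta (hq : ‖q‖ < 1) (hw : w ≠ 0) : DifferentiableAt ℂ (qTheta q) w :=
  (differentiable_qPochhammer hq w).fun_mul
    ((differentiable_qPochhammer hq (q / w)).comp w (by fun_prop (disch := exact hw)))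

lemma exists_zpow_of_qTheta_eq_zero (hq : ‖q‖ < 1) (hq0 : q ≠ 0) (hw : w ≠ 0)
    (h : qTheta q w = 0) : ∃ k : ℤ, w = q ^ k := by
  rcases mul_eq_zero.mp h with h | h <;> obtain ⟨k, hk⟩ := (qPochhammer_eq_zero_iff hq).mp h
  · exact ⟨-k, by simpa using eq_inv_of_mul_eq_one_right hk⟩
  · refine ⟨k + 1, ?_⟩
    rw [zpow_add_one₀ hq0, zpow_natCast]
    field_simp at hk
    exact hk.symm

lemma hasDerivAt_qTheta_one (hq : ‖q‖ < 1) : HasDerivAt (qTheta q) (-qPochhammer q q ^ 2) 1 := by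
  have hcofactor : DifferentiableAt ℂ
      (fun w => qPochhammer q (q * w) * qPochhammer q (q / w)) 1 :=
    ((differentiable_qPochhammer hq _).comp 1 (by fun_prop)).fun_mul
      ((differentiable_qPochhammer hq _).comp 1 (by fun_prop (disch := exact one_ne_zero)))
  have hmul := ((hasDerivAt_id (1 : ℂ)).const_sub 1).fun_mul hcofactor.hasDerivAt
  refine (hmul.congr_of_eventuallyEq (.of_forall (qTheta_eq_one_sub_mul hq))).congr_deriv ?_
  simp [sq]

lemma mul_deriv_qTheta_q_mul (hq : ‖q‖ < 1) (hq0 : q ≠ 0) (hw : w ≠ 0) (h : qTheta q w = 0) :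
    q * deriv (qTheta q) (q * w) = -deriv (qTheta q) w / w := by
  have hleft : HasDerivAt (fun w => qTheta q (q * w)) (deriv (qTheta q) (q * w) * q) w := by
    simpa [Function.comp_def] using
      (differentiableAt_qTheta hq (mul_ne_zero hq0 hw)).hasDerivAt.comp w
        ((hasDerivAt_id w).const_mul q)
  have hright : HasDerivAt (fun w => -qTheta q w / w) (-deriv (qTheta q) w / w) w := by
    refine ((differentiableAt_qTheta hq hw).hasDerivAt.fun_neg.fun_div (hasDerivAt_id w)
      hw).congr_deriv ?_
    simp only [id, h]
    field_simp
    ring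
  rw [mul_comm]
  refine hleft.unique (hright.congr_of_eventuallyEq ?_)
  filter_upwards [isOpen_ne.mem_nhds hw] with x hx using qTheta_q_mul hq hq0 hx

lemma deriv_qTheta_ne_zero (hq : ‖q‖ < 1) (hq0 : q ≠ 0) (hw : w ≠ 0) (h : qTheta q w = 0) :
    deriv (qTheta q) w ≠ 0 := by
  have hshift : ∀ w ≠ 0, (qTheta q (q * w) = 0 ∧ deriv (qTheta q) (q * w) ≠ 0) =
      (qTheta q w = 0 ∧ deriv (qTheta q) w ≠ 0) := by
    intro w hw
    have hzero : qTheta q (q * w) = 0 ↔ qTheta q w = 0 := by simp [qTheta_q_mul hq hq0 hw, hw]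
    refine propext ((and_congr_left' hzero).trans (and_congr_right fun h => not_congr ?_))
    rw [← mul_right_inj' hq0, mul_deriv_qTheta_q_mul hq hq0 hw h]
    simp [hw]
  obtain ⟨k, rfl⟩ := exists_zpow_of_qTheta_eq_zero hq hq0 hw h
  have hone : qTheta q 1 = 0 ∧ deriv (qTheta q) 1 ≠ 0 := by
    refine ⟨qTheta_one hq, ?_⟩
    rw [(hasDerivAt_qTheta_one hq).deriv]
    exact neg_ne_zero.mpr (pow_ne_zero 2 (qPochhammer_ne_zero_of_norm_lt_one hq hq))
  have htransport := apply_zpow_mul_of_apply_mul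
    (f := fun w => qTheta q w = 0 ∧ deriv (qTheta q) w ≠ 0) hq0 hshift k one_ne_zero
  rw [mul_one] at htransport
  exact (htransport.mpr hone).2

end QTheta

lemma exists_eq_mul_of_simple_zeros {U : Set ℂ} (hU : IsOpen U) {f g : ℂ → ℂ}
    (hf : DifferentiableOn ℂ f U) (hg : DifferentiableOn ℂ g U)
    (hsimple : ∀ w ∈ U, g w = 0 → deriv g w ≠ 0) (hfg : ∀ w ∈ U, g w = 0 → f w = 0) :
    ∃ h : ℂ → ℂ, DifferentiableOn ℂ h U ∧ ∀ w ∈ U, f w = g w * h w := by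
  classical
  refine ⟨fun w => if g w = 0 then deriv f w / deriv g w else f w / g w, fun w hw => ?_,
    fun w hw => ?_⟩
  · refine DifferentiableAt.differentiableWithinAt ?_
    have hUw := hU.mem_nhds hw
    by_cases h0 : g w = 0
    · have hfslope := ((differentiableOn_dslope hUw).mpr hf).differentiableAt hUw
      have hgslope := ((differentiableOn_dslope hUw).mpr hg).differentiableAt hUw
      have hne : dslope g w w ≠ 0 := by
        rw [dslope_same]
        exact hsimple w hw h0
      refine (hfslope.fun_div hgslope hne).congr_of_eventuallyEq ?_
      filter_upwards [hgslope.continuousAt.eventually_ne hne] with x hx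
      rcases eq_or_ne x w with rfl | hxw
      · simp only [h0, if_true, dslope_same]
      · simp only [dslope_of_ne _ hxw, slope_def_field, h0, hfg w hw h0, sub_zero] at hx ⊢
        rw [if_neg (div_ne_zero_iff.mp hx).1, div_div_div_cancel_right₀ (sub_ne_zero.mpr hxw)]
    · have hfdiff := hf.differentiableAt hUw
      have hgdiff := hg.differentiableAt hUw
      refine (hfdiff.fun_div hgdiff h0).congr_of_eventuallyEq ?_
      filter_upwards [hgdiff.continuousAt.eventually_ne h0] with x hx using if_neg hx
  · by_cases h0 : g w = 0
    · rw [hfg w hw h0, h0, zero_mul]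
    · simp only [if_neg h0, mul_div_cancel₀ _ h0]

section ThetaSpace

/-- The space of theta functions of degree `n` with multiplier `C` and nome `q`: the holomorphic
functions on `ℂ \ {0}` satisfying `f (q w) = C w⁻ⁿ f w`. The values at `0` are irrelevant. -/
def thetaSpace (q C : ℂ) (n : ℤ) : Submodule ℂ (ℂ → ℂ) where
  carrier := {f | DifferentiableOn ℂ f {0}ᶜ ∧ ∀ w ≠ 0, f (q * w) = C * w ^ (-n) * f w}
  add_mem' hf hg := ⟨hf.1.add hg.1, fun w hw => by
    rw [Pi.add_apply, Pi.add_apply, hf.2 w hw, hg.2 w hw, mul_add]⟩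
  zero_mem' := ⟨differentiableOn_const 0, fun w _ => by rw [Pi.zero_apply, Pi.zero_apply, mul_zero]⟩
  smul_mem' c f hf := ⟨hf.1.const_smul c, fun w hw => by
    rw [Pi.smul_apply, Pi.smul_apply, hf.2 w hw, smul_eq_mul, smul_eq_mul, mul_left_comm]⟩

variable {q C D c z : ℂ} {m n : ℤ} {f g : ℂ → ℂ}

lemma mul_mem_thetaSpace (hf : f ∈ thetaSpace q C m) (hg : g ∈ thetaSpace q D n) :
    f * g ∈ thetaSpace q (C * D) (m + n) := by
  refine ⟨hf.1.mul hg.1, fun w hw => ?_⟩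
  rw [Pi.mul_apply, Pi.mul_apply, hf.2 w hw, hg.2 w hw, neg_add, zpow_add₀ hw]
  ring

lemma qTheta_mul_left_mem_thetaSpace (hq : ‖q‖ < 1) (hq0 : q ≠ 0) (hc : c ≠ 0) :
    (fun w => qTheta q (c * w)) ∈ thetaSpace q (-c⁻¹) 1 := by
  refine ⟨fun w hw => ((differentiableAt_qTheta hq (mul_ne_zero hc hw)).comp w
    (by fun_prop)).differentiableWithinAt, fun w hw => ?_⟩
  beta_reduce
  rw [mul_left_comm, qTheta_q_mul hq hq0 (mul_ne_zero hc hw), zpow_neg_one]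
  field_simp

lemma qTheta_div_mem_thetaSpace (hq : ‖q‖ < 1) (hq0 : q ≠ 0) (hc : c ≠ 0) :
    (fun w => qTheta q (c / w)) ∈ thetaSpace q (-c / q) 1 := by
  have hreflect : (fun w => qTheta q (c / w)) = fun w => qTheta q (q / c * w) := by
    funext w
    rw [← qTheta_q_div hq0, div_div_eq_mul_div, mul_div_right_comm]
  rw [hreflect, neg_div, ← inv_div]
  exact qTheta_mul_left_mem_thetaSpace hq hq0 (div_ne_zero hq0 hc)

lemma exists_norm_zpow_mul_mem_Ioc (hq : ‖q‖ < 1) (hq0 : q ≠ 0) {w : ℂ} (hw : w ≠ 0) :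
    ∃ k : ℤ, ‖q ^ k * w‖ ∈ Set.Ioc ‖q‖ 1 := by
  have hqpos : 0 < ‖q‖ := norm_pos_iff.mpr hq0
  obtain ⟨k, hk, hk'⟩ := exists_mem_Ioc_zpow (norm_pos_iff.mpr hw) ((one_lt_inv₀ hqpos).mpr hq)
  refine ⟨k + 1, ?_, ?_⟩
  · rw [inv_zpow, inv_lt_iff_one_lt_mul₀' (zpow_pos hqpos k)] at hk
    rw [norm_mul, norm_zpow, zpow_add_one₀ hqpos.ne', mul_right_comm]
    exact lt_mul_of_one_lt_left hqpos hk
  · rw [inv_zpow, le_inv_comm₀ (norm_pos_iff.mpr hw) (zpow_pos hqpos _),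
      ← one_div, le_div_iff₀ (norm_pos_iff.mpr hw)] at hk'
    rwa [norm_mul, norm_zpow]

lemma exists_norm_le_of_mem_thetaSpace_zero (hq : ‖q‖ < 1) (hq0 : q ≠ 0)
    (hf : f ∈ thetaSpace q 1 0) : ∃ B, ∀ w ≠ 0, ‖f w‖ ≤ B := by
  have hperiodic : ∀ w ≠ 0, f (q * w) = f w := fun w hw => by
    rw [hf.2 w hw, neg_zero, zpow_zero, one_mul, one_mul]
  have hannulus : IsCompact (Metric.closedBall (0 : ℂ) 1 ∩ {x | ‖q‖ ≤ ‖x‖}) :=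
    (isCompact_closedBall _ _).inter_right (isClosed_le continuous_const continuous_norm)
  obtain ⟨B, hB⟩ := hannulus.exists_bound_of_continuousOn <| hf.1.continuousOn.mono
    fun x hx => norm_pos_iff.mp ((norm_pos_iff.mpr hq0).trans_le hx.2)
  refine ⟨B, fun w hw => ?_⟩
  obtain ⟨k, hk⟩ := exists_norm_zpow_mul_mem_Ioc hq hq0 hw
  rw [← apply_zpow_mul_of_apply_mul hq0 hperiodic k hw]
  exact hB _ ⟨mem_closedBall_zero_iff.mpr hk.2, hk.1.le⟩

lemma eq_of_mem_thetaSpace_zero (hq : ‖q‖ < 1) (hq0 : q ≠ 0) (hf : f ∈ thetaSpace q 1 0) {w z : ℂ}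
    (hw : w ≠ 0) (hz : z ≠ 0) : f w = f z := by
  obtain ⟨B, hB⟩ := exists_norm_le_of_mem_thetaSpace_zero hq hq0 hf
  have hentire : Differentiable ℂ fun x => f (exp x) := fun x =>
    (hf.1.differentiableAt (isOpen_ne.mem_nhds (exp_ne_zero x))).comp x
      differentiable_exp.differentiableAt
  have hbounded : Bornology.IsBounded (Set.range fun x => f (exp x)) :=
    isBounded_iff_forall_norm_le.mpr ⟨B, Set.forall_mem_range.mpr fun x => hB _ (exp_ne_zero x)⟩
  simpa only [exp_log hw, exp_log hz] using
    hentire.apply_eq_apply_of_bounded hbounded (log w) (log z)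

lemma qTheta_neg_one_ne_zero (hq : ‖q‖ < 1) : qTheta q (-1) ≠ 0 := by
  have hnorm : ‖-q‖ < 1 := by rwa [norm_neg]
  rw [qTheta_eq_one_sub_mul hq, mul_neg_one, div_neg, div_one]
  exact mul_ne_zero (by norm_num)
    (mul_self_ne_zero.mpr (qPochhammer_ne_zero_of_norm_lt_one hq hnorm))

lemma eq_zero_of_qTheta_mul_eq_zero (hq : ‖q‖ < 1) (hq0 : q ≠ 0) (hc : c ≠ 0)
    (hf : DifferentiableOn ℂ f {0}ᶜ) (h : ∀ w ≠ 0, qTheta q (c * w) * f w = 0) :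
    ∀ w ≠ 0, f w = 0 := by
  have htheta := (qTheta_mul_left_mem_thetaSpace hq hq0 hc).1
  have hconnected : IsPreconnected ({0}ᶜ : Set ℂ) :=
    (isConnected_compl_singleton_of_one_lt_rank (by simp) 0).isPreconnected
  refine (AnalyticOnNhd.eq_zero_or_eq_zero_of_mul_eq_zero
    (htheta.analyticOnNhd isOpen_compl_singleton) (hf.analyticOnNhd isOpen_compl_singleton)
    h hconnected).resolve_left fun hzero => ?_
  have hvalue := hzero (-c⁻¹) (neg_ne_zero.mpr (inv_ne_zero hc))
  rw [mul_neg, mul_inv_cancel₀ hc] at hvalue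
  exact qTheta_neg_one_ne_zero hq hvalue

lemma exists_mem_thetaSpace_eq_mul (hq : ‖q‖ < 1) (hq0 : q ≠ 0) (hC : C ≠ 0)
    (hf : f ∈ thetaSpace q C n) (hz : z ≠ 0) (hfz : f z = 0) :
    ∃ g ∈ thetaSpace q (-C / z) (n - 1), ∀ w ≠ 0, f w = qTheta q (z⁻¹ * w) * g w := by
  have htheta := qTheta_mul_left_mem_thetaSpace hq hq0 (inv_ne_zero hz)
  have hsimple : ∀ w ≠ 0, qTheta q (z⁻¹ * w) = 0 → deriv (fun w => qTheta q (z⁻¹ * w)) w ≠ 0 := by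
    intro w hw h
    rw [deriv_comp_mul_left, smul_eq_mul]
    exact mul_ne_zero (inv_ne_zero hz)
      (deriv_qTheta_ne_zero hq hq0 (mul_ne_zero (inv_ne_zero hz) hw) h)
  have hperiodic : ∀ w ≠ 0, (f (q * w) = 0) = (f w = 0) := fun w hw => by
    simp only [hf.2 w hw, mul_eq_zero, hC, zpow_ne_zero _ hw, false_or]
  have hzeros : ∀ w ≠ 0, qTheta q (z⁻¹ * w) = 0 → f w = 0 := by
    intro w hw h
    obtain ⟨k, hk⟩ := exists_zpow_of_qTheta_eq_zero hq hq0 (mul_ne_zero (inv_ne_zero hz) hw) h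
    rw [inv_mul_eq_iff_eq_mul₀ hz, mul_comm] at hk
    rwa [hk, apply_zpow_mul_of_apply_mul (f := fun w => f w = 0) hq0 hperiodic k hz]
  obtain ⟨g, hg, hfg⟩ :=
    exists_eq_mul_of_simple_zeros isOpen_compl_singleton hf.1 htheta.1 hsimple hzeros
  refine ⟨g, ⟨hg, fun w hw => sub_eq_zero.mp ?_⟩, hfg⟩
  have hqw : ∀ w ≠ 0, q * w ≠ 0 := fun w hw => mul_ne_zero hq0 hw
  refine eq_zero_of_qTheta_mul_eq_zero (f := fun w => g (q * w) - -C / z * w ^ (-(n - 1)) * g w)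
    hq hq0 (inv_ne_zero hz) ?_ (fun w hw => ?_) w hw
  · exact (hg.comp (by fun_prop) hqw).sub
      ((DifferentiableOn.const_mul (fun w hw => (differentiableAt_zpow.mpr
        (.inl hw)).differentiableWithinAt) _).mul hg)
  · have hshift : qTheta q (z⁻¹ * (q * w)) = -z⁻¹⁻¹ * w ^ (-1 : ℤ) * qTheta q (z⁻¹ * w) :=
      htheta.2 w hw
    have hquasi := hf.2 w hw
    have hpow : w ^ (-(n - 1)) = w * w ^ (-n) := by
      rw [neg_sub, sub_eq_add_neg, zpow_one_add₀ hw]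
    rw [hfg w hw, hfg _ (hqw w hw), hshift, inv_inv, zpow_neg_one] at hquasi
    rw [hpow]
    field_simp at hquasi ⊢
    linear_combination -hquasi

lemma eq_zero_of_mem_thetaSpace_neg_one (hq : ‖q‖ < 1) (hq0 : q ≠ 0) (hC : C ≠ 0)
    (hf : f ∈ thetaSpace q C (-1)) : ∀ w ≠ 0, f w = 0 := by
  have hmul := mul_mem_thetaSpace (qTheta_mul_left_mem_thetaSpace hq hq0 (neg_ne_zero.mpr hC)) hf
  rw [inv_neg, neg_neg, inv_mul_cancel₀ hC, add_neg_cancel] at hmul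
  refine eq_zero_of_qTheta_mul_eq_zero hq hq0 (neg_ne_zero.mpr hC) hf.1 fun w hw => ?_
  have hconst := eq_of_mem_thetaSpace_zero hq hq0 hmul hw (inv_ne_zero (neg_ne_zero.mpr hC))
  simpa only [Pi.mul_apply, mul_inv_cancel₀ (neg_ne_zero.mpr hC), qTheta_one hq, zero_mul]
    using hconst

lemma eq_zero_of_mem_thetaSpace_of_zeros (hq : ‖q‖ < 1) (hq0 : q ≠ 0) (zs : List ℂ) (hC : C ≠ 0)
    (hf : f ∈ thetaSpace q C (zs.length - 1)) (hzs : ∀ z ∈ zs, z ≠ 0 ∧ f z = 0)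
    (hinequiv : zs.Pairwise fun z w => qTheta q (z⁻¹ * w) ≠ 0) : ∀ w ≠ 0, f w = 0 := by
  induction zs generalizing C f with
  | nil => exact eq_zero_of_mem_thetaSpace_neg_one hq hq0 hC (by simpa using hf)
  | cons z zs ih =>
    obtain ⟨⟨hz, hfz⟩, hzs⟩ := List.forall_mem_cons.mp hzs
    obtain ⟨hzw, hinequiv⟩ := List.pairwise_cons.mp hinequiv
    obtain ⟨g, hg, hfg⟩ := exists_mem_thetaSpace_eq_mul hq hq0 hC hf hz hfz
    rw [List.length_cons, Nat.cast_add_one, add_sub_cancel_right] at hg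
    have hg0 : ∀ w ≠ 0, g w = 0 := by
      refine ih (div_ne_zero (neg_ne_zero.mpr hC) hz) hg (fun w hw => ⟨(hzs w hw).1, ?_⟩) hinequiv
      exact (mul_eq_zero.mp ((hfg w (hzs w hw).1).symm.trans (hzs w hw).2)).resolve_left (hzw w hw)
    intro w hw
    rw [hfg w hw, hg0 w hw, mul_zero]

end ThetaSpace

section KernelSum

/-- One of the two terms of `kernelSum`. With `q = p²` and the substitutions `v = e^{2πiy}`,
`w = e^{2πiz}`, it is what remains of `f_δ(l; z) K(γ; z + ia_{-δ}/2, y)` once the common value of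
the kernel function has been divided out. -/
def kernelTerm (q : ℂ) (t : Fin 4 → ℂ) (G v w : ℂ) : ℂ :=
  (∏ n, qTheta q (t n * w)) * (qTheta q (w * v / G) * qTheta q (w / (v * G))) / qTheta q (w ^ 2)

/-- One side of the kernel identity, in multiplicative notation. -/
def kernelSum (q : ℂ) (t : Fin 4 → ℂ) (G v w : ℂ) : ℂ :=
  kernelTerm q t G v w + kernelTerm q t G v w⁻¹

/-- The difference of the two sides of the kernel identity: they are exchanged by `v ↔ w` and
`t ↔ q G / t`. -/
def kernelDefect (q : ℂ) (t : Fin 4 → ℂ) (G v w : ℂ) : ℂ :=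
  kernelSum q t G v w - kernelSum q (fun n => q * G / t n) G w v

variable {q G v w : ℂ} {t : Fin 4 → ℂ}

lemma kernelSum_inv_left : kernelSum q t G v⁻¹ w = kernelSum q t G v w := by
  have hterm (x : ℂ) : kernelTerm q t G v⁻¹ x = kernelTerm q t G v x := by
    rw [kernelTerm, kernelTerm, mul_comm (qTheta q (x * v⁻¹ / G)), ← div_eq_mul_inv, div_div,
      div_mul_eq_div_div, div_inv_eq_mul]
  rw [kernelSum, kernelSum, hterm, hterm]

lemma kernelSum_inv_right : kernelSum q t G v w⁻¹ = kernelSum q t G v w := by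
  rw [kernelSum, kernelSum, inv_inv, add_comm]

lemma kernelDefect_inv_left : kernelDefect q t G v⁻¹ w = kernelDefect q t G v w := by
  rw [kernelDefect, kernelDefect, kernelSum_inv_left, kernelSum_inv_right]

lemma kernelDefect_inv_right : kernelDefect q t G v w⁻¹ = kernelDefect q t G v w := by
  rw [kernelDefect, kernelDefect, kernelSum_inv_left, kernelSum_inv_right]

lemma kernelTerm_comp_perm (σ : Equiv.Perm (Fin 4)) :
    kernelTerm q (t ∘ σ) G v w = kernelTerm q t G v w := by
  simp only [kernelTerm, Function.comp_apply, Equiv.prod_comp σ fun n => qTheta q (t n * w)]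

lemma kernelDefect_comp_perm (σ : Equiv.Perm (Fin 4)) :
    kernelDefect q (t ∘ σ) G v w = kernelDefect q t G v w := by
  have hdual : (fun n => q * G / (t ∘ σ) n) = (fun n => q * G / t n) ∘ σ := rfl
  simp only [kernelDefect, kernelSum, hdual, kernelTerm_comp_perm]

lemma kernelDefect_dual (hq0 : q ≠ 0) (hG : G ≠ 0) :
    kernelDefect q (fun n => q * G / t n) G w v = -kernelDefect q t G v w := by
  simp only [kernelDefect, div_div_cancel₀ (mul_ne_zero hq0 hG), neg_sub]

lemma kernelTerm_mem_thetaSpace (hq : ‖q‖ < 1) (hq0 : q ≠ 0) (hw : w ≠ 0) {a b : ℂ} (ha : a ≠ 0)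
    (hb : b ≠ 0) (c d : ℂ) :
    (fun x => kernelTerm q ![a * x, b / x, c, d] G v w) ∈ thetaSpace q (b / (a * q)) 2 := by
  have hmem := Submodule.smul_mem _ (qTheta q (c * w) * qTheta q (d * w) *
      (qTheta q (w * v / G) * qTheta q (w / (v * G))) / qTheta q (w ^ 2)) <|
    mul_mem_thetaSpace (qTheta_mul_left_mem_thetaSpace hq hq0 (mul_ne_zero ha hw))
      (qTheta_div_mem_thetaSpace hq hq0 (mul_ne_zero hb hw))
  convert hmem using 1
  · congr 1
    field_simp
  · funext x
    simp only [kernelTerm, Fin.prod_univ_four, Matrix.cons_val, Pi.smul_apply, Pi.mul_apply,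
      smul_eq_mul, div_mul_eq_mul_div, mul_right_comm a x w]
    ring

lemma kernelSum_mem_thetaSpace (hq : ‖q‖ < 1) (hq0 : q ≠ 0) (hw : w ≠ 0) {a b : ℂ} (ha : a ≠ 0)
    (hb : b ≠ 0) (c d : ℂ) :
    (fun x => kernelSum q ![a * x, b / x, c, d] G v w) ∈ thetaSpace q (b / (a * q)) 2 :=
  add_mem (kernelTerm_mem_thetaSpace hq hq0 hw ha hb c d)
    (kernelTerm_mem_thetaSpace hq hq0 (inv_ne_zero hw) ha hb c d)

lemma kernelDefect_mem_thetaSpace (hq : ‖q‖ < 1) (hq0 : q ≠ 0) (hG : G ≠ 0) (hv : v ≠ 0)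
    (hw : w ≠ 0) {P : ℂ} (hP : P ≠ 0) (c d : ℂ) :
    (fun x => kernelDefect q ![x, P / x, c, d] G v w) ∈ thetaSpace q (P / q) 2 := by
  have hqG := mul_ne_zero hq0 hG
  have hprimal := kernelSum_mem_thetaSpace (G := G) (v := v) hq hq0 hw one_ne_zero hP c d
  have hdual := kernelSum_mem_thetaSpace (G := G) (v := w) hq hq0 hv (div_ne_zero hqG hP) hqG
    (q * G / c) (q * G / d)
  have hmultiplier : q * G / (q * G / P * q) = P / q := by field_simp
  have hvec (x : ℂ) : (fun n => q * G / ![x, P / x, c, d] n) =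
      ![q * G / P * x, q * G / x, q * G / c, q * G / d] ∘ Equiv.swap 0 1 := by
    funext n
    fin_cases n <;> simp [Equiv.swap_apply_of_ne_of_ne, div_div_eq_mul_div, div_mul_eq_mul_div]
  simp only [one_mul] at hprimal
  rw [hmultiplier] at hdual
  simp only [kernelDefect, hvec, kernelSum, kernelTerm_comp_perm]
  exact sub_mem hprimal hdual

/-- The pairs `(v, w)` for which the denominators of `kernelDefect` do not vanish and the points
at which it is interpolated are inequivalent modulo `q ^ ℤ`. -/
structure IsGeneric (q G v w : ℂ) : Prop where
  left_ne_zero : v ≠ 0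
  right_ne_zero : w ≠ 0
  left_sq : qTheta q (v ^ 2) ≠ 0
  right_sq : qTheta q (w ^ 2) ≠ 0
  mul_mul : qTheta q (q * G * (v * w)) ≠ 0
  mul_div : qTheta q (q * G * (v / w)) ≠ 0
  div_mul : qTheta q (q * G * (w / v)) ≠ 0
  div_div : qTheta q (q * G / (v * w)) ≠ 0

lemma IsGeneric.symm (h : IsGeneric q G v w) : IsGeneric q G w v where
  left_ne_zero := h.right_ne_zero
  right_ne_zero := h.left_ne_zero
  left_sq := h.right_sq
  right_sq := h.left_sq
  mul_mul := mul_comm v w ▸ h.mul_mul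
  mul_div := h.div_mul
  div_mul := h.mul_div
  div_div := mul_comm v w ▸ h.div_div

lemma qTheta_inv_ne_zero (hq : ‖q‖ < 1) (hw : w ≠ 0) (h : qTheta q w ≠ 0) : qTheta q w⁻¹ ≠ 0 := by
  rw [qTheta_inv hq hw]
  exact div_ne_zero (neg_ne_zero.mpr h) hw

lemma IsGeneric.inv_right (hq : ‖q‖ < 1) (h : IsGeneric q G v w) : IsGeneric q G v w⁻¹ where
  left_ne_zero := h.left_ne_zero
  right_ne_zero := inv_ne_zero h.right_ne_zero
  left_sq := h.left_sq
  right_sq := by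
    rw [inv_pow]
    exact qTheta_inv_ne_zero hq (pow_ne_zero 2 h.right_ne_zero) h.right_sq
  mul_mul := by simpa only [div_eq_mul_inv] using h.mul_div
  mul_div := by simpa only [div_inv_eq_mul] using h.mul_mul
  div_mul := by simpa only [div_eq_mul_inv, mul_inv, mul_comm] using h.div_div
  div_div := by simpa only [div_eq_mul_inv, mul_inv, inv_inv, mul_comm] using h.div_mul

lemma kernelSum_eq_zero_of_inv (hq : ‖q‖ < 1) (hw : w ≠ 0) (b d : ℂ) :
    kernelSum q ![w, b, w⁻¹, d] G v w = 0 := by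
  simp only [kernelSum, kernelTerm, Fin.prod_univ_four, Matrix.cons_val, inv_mul_cancel₀ hw,
    mul_inv_cancel₀ hw, qTheta_one hq, zero_mul, mul_zero, zero_div, add_zero]

lemma kernelSum_eq_zero_of_dual_inv (hq : ‖q‖ < 1) (hq0 : q ≠ 0) (hv : v ≠ 0)
    (hw : w ≠ 0) {c : ℂ} (hc : c ≠ 0) :
    kernelSum q ![q * G / v, c, q * G * v, c⁻¹] G v w = 0 := by
  have hterm (x : ℂ) : kernelTerm q ![q * G / v, c, q * G * v, c⁻¹] G v x =
      qTheta q (q * G * (x / v)) * qTheta q (q * G / (x / v)) *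
        (qTheta q (q * G * (x * v)) * qTheta q (q * G / (x * v))) *
        (qTheta q (c * x) * qTheta q (x / c)) / qTheta q (x ^ 2) := by
    rw [kernelTerm, ← qTheta_q_div hq0 (x * v / G), ← qTheta_q_div hq0 (x / (v * G))]
    simp only [Fin.prod_univ_four, Matrix.cons_val, div_div_eq_mul_div]
    ring_nf
  have hodd : kernelTerm q ![q * G / v, c, q * G * v, c⁻¹] G v w⁻¹ =
      -kernelTerm q ![q * G / v, c, q * G * v, c⁻¹] G v w := by
    have hcw : qTheta q (c * w⁻¹) = -qTheta q (w / c) / (w / c) := by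
      rw [← qTheta_inv hq (div_ne_zero hw hc), inv_div, div_eq_mul_inv]
    have hcw' : qTheta q (w⁻¹ / c) = -qTheta q (c * w) / (c * w) := by
      rw [← qTheta_inv hq (mul_ne_zero hc hw), mul_inv, div_eq_mul_inv, mul_comm]
    have hdiv : q * G * (w⁻¹ / v) = q * G / (w * v) := by field_simp
    have hdiv' : q * G / (w⁻¹ / v) = q * G * (w * v) := by field_simp
    have hmul : q * G * (w⁻¹ * v) = q * G / (w / v) := by field_simp
    have hmul' : q * G / (w⁻¹ * v) = q * G * (w / v) := by field_simp
    rw [hterm, hterm, hcw, hcw', hdiv, hdiv', hmul, hmul', inv_pow,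
      qTheta_inv hq (pow_ne_zero 2 hw)]
    field_simp
  rw [kernelSum, hodd, add_neg_cancel]

lemma kernelDefect_eq_zero_of_inv (hq : ‖q‖ < 1) (hq0 : q ≠ 0) (hG : G ≠ 0) (hv : v ≠ 0)
    (hw : w ≠ 0) {b d : ℂ} (hbd : b * d = q ^ 2 * G ^ 2) :
    kernelDefect q ![w, b, w⁻¹, d] G v w = 0 := by
  have hb : b ≠ 0 := left_ne_zero_of_mul (hbd ▸ by positivity : b * d ≠ 0)
  have hd : d ≠ 0 := right_ne_zero_of_mul (hbd ▸ by positivity : b * d ≠ 0)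
  have hdual : (fun n => q * G / ![w, b, w⁻¹, d] n) =
      ![q * G / w, q * G / b, q * G * w, (q * G / b)⁻¹] := by
    have hlast : q * G / d = (q * G / b)⁻¹ := by
      field_simp
      linear_combination -hbd
    funext n
    fin_cases n <;> simp [hlast]
  rw [kernelDefect, hdual, kernelSum_eq_zero_of_inv hq hw,
    kernelSum_eq_zero_of_dual_inv hq hq0 hw hv (div_ne_zero (mul_ne_zero hq0 hG) hb), sub_zero]

lemma kernelDefect_eq_zero_of_mul_of_inv (hq : ‖q‖ < 1) (hq0 : q ≠ 0) (hG : G ≠ 0)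
    (hgen : IsGeneric q G v w) {b d : ℂ} (hb : b ≠ 0) (hd : d ≠ 0) (hbd : b * d * v = q * G * w) :
    kernelDefect q ![q * G * v, b, w⁻¹, d] G v w = 0 := by
  have hv := hgen.left_ne_zero
  have hw := hgen.right_ne_zero
  have hsurvivor : kernelTerm q ![q * G * v, b, w⁻¹, d] G v w⁻¹ =
      kernelTerm q (fun n => q * G / ![q * G * v, b, w⁻¹, d] n) G w v⁻¹ := by
    have hw2 := (hgen.inv_right hq).right_sq
    have hv2 := (hgen.symm.inv_right hq).right_sq
    rw [pow_two] at hw2 hv2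
    have hb' : q * G / b * v⁻¹ = d * w⁻¹ := by
      field_simp
      linear_combination -hbd
    have hd' : q * G / d * v⁻¹ = b * w⁻¹ := by
      field_simp
      linear_combination -hbd
    have hv' : q * G / (q * G * v) * v⁻¹ = v⁻¹ * v⁻¹ := by field_simp
    have hw' : q * G / w⁻¹ * v⁻¹ = q / (w⁻¹ * v / G) := by field_simp
    have hvw : v⁻¹ * w / G = q / (q * G * v * w⁻¹) := by field_simp
    have hvw' : v⁻¹ / (w * G) = w⁻¹ / (v * G) := by field_simp
    simp only [kernelTerm, Fin.prod_univ_four, Matrix.cons_val, pow_two]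
    rw [hb', hd', hv', hw', hvw, hvw', qTheta_q_div hq0, qTheta_q_div hq0,
      div_eq_div_iff hw2 hv2]
    ring
  have hprimal : kernelTerm q ![q * G * v, b, w⁻¹, d] G v w = 0 := by
    simp only [kernelTerm, Fin.prod_univ_four, Matrix.cons_val, inv_mul_cancel₀ hw, qTheta_one hq,
      zero_mul, mul_zero, zero_div]
  have hdual : kernelTerm q (fun n => q * G / ![q * G * v, b, w⁻¹, d] n) G w v = 0 := by
    have hv' : q * G / (q * G * v) * v = 1 := by field_simp
    simp only [kernelTerm, Fin.prod_univ_four, Matrix.cons_val, hv', qTheta_one hq,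
      zero_mul, zero_div]
  rw [kernelDefect, kernelSum, kernelSum, hprimal, hdual, hsurvivor, sub_self]

lemma kernelDefect_eq_zero_of_zeros (hq : ‖q‖ < 1) (hq0 : q ≠ 0) (hG : G ≠ 0) (hv : v ≠ 0)
    (hw : w ≠ 0) (ht : ∀ n, t n ≠ 0) {x y z : ℂ}
    (hx : x ≠ 0) (hy : y ≠ 0) (hz : z ≠ 0)
    (hx0 : kernelDefect q ![x, t 0 * t 1 / x, t 2, t 3] G v w = 0)
    (hy0 : kernelDefect q ![y, t 0 * t 1 / y, t 2, t 3] G v w = 0)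
    (hz0 : kernelDefect q ![z, t 0 * t 1 / z, t 2, t 3] G v w = 0)
    (hxy : qTheta q (x⁻¹ * y) ≠ 0) (hxz : qTheta q (x⁻¹ * z) ≠ 0)
    (hyz : qTheta q (y⁻¹ * z) ≠ 0) : kernelDefect q t G v w = 0 := by
  have hP : t 0 * t 1 ≠ 0 := mul_ne_zero (ht 0) (ht 1)
  have hzero := eq_zero_of_mem_thetaSpace_of_zeros hq hq0 [x, y, z] (div_ne_zero hP hq0)
    (kernelDefect_mem_thetaSpace hq hq0 hG hv hw hP (t 2) (t 3)) (by simp [*]) (by simp [*])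
    (t 0) (ht 0)
  rw [mul_div_cancel_left₀ _ (ht 0)] at hzero
  rwa [← FinVec.etaExpand_eq t]

lemma apply_ne_zero_of_prod_eq (hq0 : q ≠ 0) (hG : G ≠ 0) (ht : ∏ n, t n = q ^ 2 * G ^ 2)
    (n : Fin 4) : t n ≠ 0 :=
  Finset.prod_ne_zero_iff.mp (by rw [ht]; positivity) n (Finset.mem_univ n)

lemma kernelDefect_eq_zero_of_apply_two_eq_inv (hq : ‖q‖ < 1) (hq0 : q ≠ 0) (hG : G ≠ 0)
    (hgen : IsGeneric q G v w) (ht : ∏ n, t n = q ^ 2 * G ^ 2) (hw2 : t 2 = w⁻¹) :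
    kernelDefect q t G v w = 0 := by
  have hv := hgen.left_ne_zero
  have hw := hgen.right_ne_zero
  have ht0 := apply_ne_zero_of_prod_eq hq0 hG ht
  have hP : t 0 * t 1 * t 3 = q ^ 2 * G ^ 2 * w := by
    rw [← ht, Fin.prod_univ_four, hw2]
    field_simp
  have hzero : kernelDefect q ![w, t 0 * t 1 / w, w⁻¹, t 3] G v w = 0 := by
    refine kernelDefect_eq_zero_of_inv hq hq0 hG hv hw ?_
    rw [div_mul_eq_mul_div, hP, mul_div_cancel_right₀ _ hw]
  have hzero_mul {u : ℂ} (hgen : IsGeneric q G u w) :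
      kernelDefect q ![q * G * u, t 0 * t 1 / (q * G * u), w⁻¹, t 3] G u w = 0 := by
    have hu := hgen.left_ne_zero
    refine kernelDefect_eq_zero_of_mul_of_inv hq hq0 hG hgen
      (div_ne_zero (mul_ne_zero (ht0 0) (ht0 1)) (by positivity)) (ht0 3) ?_
    field_simp
    linear_combination hP
  have hzero_inv := hzero_mul (hgen.symm.inv_right hq).symm
  rw [kernelDefect_inv_left] at hzero_inv
  have hratio_div_div : w⁻¹ * (q * G * v⁻¹) = q * G / (v * w) := by field_simp
  have hratio_mul_div : w⁻¹ * (q * G * v) = q * G * (v / w) := by field_simp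
  have hratio_left_sq : (q * G * v⁻¹)⁻¹ * (q * G * v) = v ^ 2 := by field_simp
  rw [← hw2] at hzero hzero_inv hzero_mul
  exact kernelDefect_eq_zero_of_zeros hq hq0 hG hv hw ht0 hw (by positivity) (by positivity)
    hzero hzero_inv (hzero_mul hgen) (hratio_div_div ▸ hgen.div_div)
    (hratio_mul_div ▸ hgen.mul_div) (hratio_left_sq ▸ hgen.left_sq)

lemma kernelDefect_eq_zero_of_apply_eq_inv (hq : ‖q‖ < 1) (hq0 : q ≠ 0) (hG : G ≠ 0)
    (hgen : IsGeneric q G v w) (ht : ∏ n, t n = q ^ 2 * G ^ 2) {i : Fin 4} (hi : t i = w⁻¹) :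
    kernelDefect q t G v w = 0 := by
  rw [← kernelDefect_comp_perm (Equiv.swap 2 i)]
  refine kernelDefect_eq_zero_of_apply_two_eq_inv hq hq0 hG hgen ?_ ?_
  · simpa only [Function.comp_apply, Equiv.prod_comp (Equiv.swap 2 i) t] using ht
  · rw [Function.comp_apply, Equiv.swap_apply_left, hi]

lemma kernelDefect_eq_zero_of_apply_eq (hq : ‖q‖ < 1) (hq0 : q ≠ 0) (hG : G ≠ 0)
    (hgen : IsGeneric q G v w) (ht : ∏ n, t n = q ^ 2 * G ^ 2) {i : Fin 4} (hi : t i = w) :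
    kernelDefect q t G v w = 0 := by
  rw [← kernelDefect_inv_right]
  exact kernelDefect_eq_zero_of_apply_eq_inv hq hq0 hG (hgen.inv_right hq) ht
    (hi.trans (inv_inv w).symm)

lemma kernelDefect_eq_zero_of_apply_eq_mul (hq : ‖q‖ < 1) (hq0 : q ≠ 0) (hG : G ≠ 0)
    (hgen : IsGeneric q G v w) (ht : ∏ n, t n = q ^ 2 * G ^ 2) {i : Fin 4}
    (hi : t i = q * G * v) : kernelDefect q t G v w = 0 := by
  rw [← neg_eq_zero, ← kernelDefect_dual hq0 hG]
  refine kernelDefect_eq_zero_of_apply_eq_inv hq hq0 hG hgen.symm (i := i) ?_ ?_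
  · rw [Finset.prod_div_distrib, ht, Finset.prod_const, Finset.card_fin]
    field_simp
  · rw [hi, div_mul_cancel_left₀ (mul_ne_zero hq0 hG)]

lemma kernelSum_eq_kernelSum_dual (hq : ‖q‖ < 1) (hq0 : q ≠ 0) (hG : G ≠ 0)
    (hgen : IsGeneric q G v w) (ht : ∏ n, t n = q ^ 2 * G ^ 2) :
    kernelSum q t G v w = kernelSum q (fun n => q * G / t n) G w v := by
  have hv := hgen.left_ne_zero
  have hw := hgen.right_ne_zero
  have hprod {s : ℂ} (hs : s ≠ 0) : ∏ n, ![s, t 0 * t 1 / s, t 2, t 3] n = q ^ 2 * G ^ 2 := by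
    simp only [← ht, Fin.prod_univ_four, Matrix.cons_val, mul_div_cancel₀ _ hs]
  have hqGv : q * G * v ≠ 0 := by positivity
  have hw' := inv_ne_zero hw
  have hratio_right_sq : w⁻¹⁻¹ * w = w ^ 2 := by field_simp
  have hratio_mul_mul : w⁻¹⁻¹ * (q * G * v) = q * G * (v * w) := by field_simp
  have hratio_mul_div : w⁻¹ * (q * G * v) = q * G * (v / w) := by field_simp
  exact sub_eq_zero.mp <| kernelDefect_eq_zero_of_zeros hq hq0 hG hv hw
    (apply_ne_zero_of_prod_eq hq0 hG ht) hw' hw hqGv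
    (kernelDefect_eq_zero_of_apply_eq_inv hq hq0 hG hgen (hprod hw') (i := 0) rfl)
    (kernelDefect_eq_zero_of_apply_eq hq hq0 hG hgen (hprod hw) (i := 0) rfl)
    (kernelDefect_eq_zero_of_apply_eq_mul hq hq0 hG hgen (hprod hqGv) (i := 0) rfl)
    (hratio_right_sq ▸ hgen.right_sq) (hratio_mul_mul ▸ hgen.mul_mul)
    (hratio_mul_div ▸ hgen.mul_div)

end KernelSum

section EllipticGamma

variable {p q z c : ℂ}

lemma norm_sq_lt_one (hq : ‖q‖ < 1) : ‖q ^ 2‖ < 1 :=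
  (norm_pow q 2).trans_lt (pow_lt_one₀ (norm_nonneg q) hq two_ne_zero)

/-- The coefficients `p ^ (2m+1) q ^ (2n+1)` of the double product `gammaProd`. -/
def gammaCoeff (p q : ℂ) (i : ℕ × ℕ) : ℂ := p ^ (2 * i.1 + 1) * q ^ (2 * i.2 + 1)

/-- The double product `∏_{m,n} (1 - p ^ (2m+1) q ^ (2n+1) w)`, which is the denominator of the
elliptic gamma function. -/
def gammaProd (p q : ℂ) : ℂ → ℂ := canonicalProd (gammaCoeff p q)

lemma summable_norm_gammaCoeff (hp : ‖p‖ < 1) (hq : ‖q‖ < 1) :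
    Summable fun i => ‖gammaCoeff p q i‖ := by
  have hodd {r : ℂ} (hr : ‖r‖ < 1) : Summable fun n : ℕ => ‖r‖ ^ (2 * n + 1) :=
    (summable_geometric_of_lt_one (norm_nonneg r) hr).comp_injective (i := fun n => 2 * n + 1)
      fun a b hab => by simpa using hab
  simpa [gammaCoeff] using (hodd hp).mul_of_nonneg (hodd hq) (fun _ => by positivity)
    (fun _ => by positivity)

lemma differentiable_gammaProd (hp : ‖p‖ < 1) (hq : ‖q‖ < 1) : Differentiable ℂ (gammaProd p q) :=
  differentiable_canonicalProd (summable_norm_gammaCoeff hp hq)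

lemma gammaProd_one_ne_zero (hp : ‖p‖ < 1) (hq : ‖q‖ < 1) : gammaProd p q 1 ≠ 0 := by
  rw [gammaProd, Ne, canonicalProd_eq_zero_iff (summable_norm_gammaCoeff hp hq)]
  rintro ⟨i, hi⟩
  have hnorm : ‖p‖ ^ (2 * i.1 + 1) * ‖q‖ ^ (2 * i.2 + 1) = 1 := by
    simpa [gammaCoeff] using congrArg norm hi
  exact (mul_lt_one_of_nonneg_of_lt_one_left (by positivity)
    (pow_lt_one₀ (norm_nonneg p) hp (Nat.succ_ne_zero _))
    (pow_le_one₀ (norm_nonneg q) hq.le)).ne hnorm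

lemma hasProd_gammaProd (hp : ‖p‖ < 1) (hq : ‖q‖ < 1) (w : ℂ) :
    HasProd (fun m : ℕ => qPochhammer (q ^ 2) ((p ^ 2) ^ m * (p * q * w))) (gammaProd p q w) := by
  refine (multipliable_canonicalProd
    (summable_norm_gammaCoeff hp hq) w).hasProd.prod_fiberwise fun m => ?_
  convert hasProd_qPochhammer (norm_sq_lt_one hq) ((p ^ 2) ^ m * (p * q * w)) using 2
  simp only [gammaCoeff]
  ring

lemma gammaProd_eq_qPochhammer_mul (hp : ‖p‖ < 1) (hq : ‖q‖ < 1) (w : ℂ) :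
    gammaProd p q w = qPochhammer (p ^ 2) (p * q * w) * gammaProd p q (q ^ 2 * w) := by
  refine (hasProd_gammaProd hp hq w).unique ?_
  convert (hasProd_qPochhammer (norm_sq_lt_one hp) (p * q * w)).mul
    (hasProd_gammaProd hp hq (q ^ 2 * w)) using 2 with m
  rw [qPochhammer_eq_one_sub_mul (norm_sq_lt_one hq)]
  ring_nf

/-- The coordinate `e^{2πiz}`, in which `Rfun` and `Gfun` are expressed by products. -/
def expCoord (z : ℂ) : ℂ := exp (2 * Real.pi * I * z)

lemma expCoord_ne_zero (z : ℂ) : expCoord z ≠ 0 := exp_ne_zero _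

lemma expCoord_zero : expCoord 0 = 1 := by rw [expCoord, mul_zero, exp_zero]

lemma expCoord_add (x y : ℂ) : expCoord (x + y) = expCoord x * expCoord y := by
  rw [expCoord, mul_add, exp_add, expCoord, expCoord]

lemma expCoord_neg (x : ℂ) : expCoord (-x) = (expCoord x)⁻¹ := by
  rw [expCoord, mul_neg, exp_neg, expCoord]

lemma expCoord_sub (x y : ℂ) : expCoord (x - y) = expCoord x / expCoord y := by
  rw [sub_eq_add_neg, expCoord_add, expCoord_neg, div_eq_mul_inv]

lemma expCoord_sum {ι : Type*} (s : Finset ι) (f : ι → ℂ) :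
    expCoord (∑ i ∈ s, f i) = ∏ i ∈ s, expCoord (f i) := by
  simp only [expCoord, Finset.mul_sum, exp_sum]

lemma differentiable_expCoord : Differentiable ℂ expCoord := by
  unfold expCoord
  fun_prop

/-- The nome `q_δ` of the half-period `I * a_δ / 2`. -/
def nome (a : ℂ) : ℂ := exp (-(Real.pi : ℂ) * a)

lemma nome_ne_zero (a : ℂ) : nome a ≠ 0 := exp_ne_zero _

lemma norm_nome_lt_one {a : ℂ} (ha : 0 < a.re) : ‖nome a‖ < 1 := by
  rw [nome, norm_exp, Real.exp_lt_one_iff]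
  simpa using mul_pos Real.pi_pos ha

lemma expCoord_I_mul_div_two (a : ℂ) : expCoord (I * a / 2) = nome a := by
  rw [expCoord, nome]
  congr 1
  linear_combination (Real.pi * a) * I_sq

lemma Rfun_eq_qTheta (hq : ‖q‖ < 1) (hq0 : q ≠ 0) (z : ℂ) :
    Rfun q z = qTheta (q ^ 2) (q * expCoord z) := by
  have hprod := hasProd_qPochhammer (norm_sq_lt_one hq)
  have hreflect : q ^ 2 / (q * expCoord z) = q * expCoord (-z) := by
    rw [expCoord_neg]
    field_simp
  rw [qTheta, hreflect, Rfun, ← ((hprod _).mul (hprod _)).tprod_eq]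
  refine tprod_congr fun k => ?_
  rw [expCoord, expCoord, mul_neg]
  ring

lemma differentiable_Rfun (hq : ‖q‖ < 1) (hq0 : q ≠ 0) : Differentiable ℂ (Rfun q) := by
  rw [funext (Rfun_eq_qTheta hq hq0)]
  exact fun z => DifferentiableAt.comp (g := qTheta (q ^ 2)) z
    (differentiableAt_qTheta (norm_sq_lt_one hq) (mul_ne_zero hq0 (expCoord_ne_zero z)))
    ((differentiable_expCoord z).const_mul q)

lemma Rfun_zero_ne_zero (hq : ‖q‖ < 1) (hq0 : q ≠ 0) : Rfun q 0 ≠ 0 := by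
  have hpoch := qPochhammer_ne_zero_of_norm_lt_one (norm_sq_lt_one hq) hq
  have hreflect : q ^ 2 / q = q := by rw [sq, mul_div_cancel_right₀ _ hq0]
  rw [Rfun_eq_qTheta hq hq0, expCoord_zero, mul_one, qTheta, hreflect]
  exact mul_ne_zero hpoch hpoch

lemma Gfun_eq_div (hp : ‖p‖ < 1) (hq : ‖q‖ < 1) (hz : gammaProd p q (expCoord z) ≠ 0) :
    Gfun p q z = gammaProd p q (expCoord z)⁻¹ / gammaProd p q (expCoord z) := by
  have hmul := multipliable_canonicalProd (summable_norm_gammaCoeff hp hq)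
  rw [gammaProd, canonicalProd, canonicalProd, ← (hmul _).tprod_div₀ (hmul _) hz, ← expCoord_neg]
  simp only [Gfun, gammaCoeff, expCoord, mul_neg]

lemma Gfun_comm (p q z : ℂ) : Gfun p q z = Gfun q p z := by
  unfold Gfun
  rw [← (Equiv.prodComm ℕ ℕ).tprod_eq]
  refine tprod_congr fun i => ?_
  rw [Equiv.prodComm_apply, Prod.fst_swap, Prod.snd_swap, mul_comm (p ^ _)]

/-- At its poles `Gfun p q` takes the junk value `0`, whence the condition on `z - c`. -/
lemma Gfun_add_half_period (hp : ‖p‖ < 1) (hp0 : p ≠ 0) (hq : ‖q‖ < 1) (hc : expCoord c = q)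
    (hz : gammaProd p q (expCoord (z - c)) ≠ 0) :
    Gfun p q (z + c) = Rfun p z * Gfun p q (z - c) := by
  have hq0 : q ≠ 0 := hc ▸ expCoord_ne_zero c
  have hw := expCoord_ne_zero z
  have hden := gammaProd_eq_qPochhammer_mul hp hq (expCoord z / q)
  have hnum := gammaProd_eq_qPochhammer_mul hp hq (expCoord z * q)⁻¹
  have hden_poch : p * q * (expCoord z / q) = p * expCoord z := by field_simp
  have hden_shift : q ^ 2 * (expCoord z / q) = expCoord z * q := by field_simp
  have hnum_poch : p * q * (expCoord z * q)⁻¹ = p ^ 2 / (p * expCoord z) := by field_simp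
  have hnum_shift : q ^ 2 * (expCoord z * q)⁻¹ = (expCoord z / q)⁻¹ := by field_simp
  rw [hden_poch, hden_shift] at hden
  rw [hnum_poch, hnum_shift] at hnum
  have hz' := hz
  rw [expCoord_sub, hc, hden] at hz'
  obtain ⟨hpoch, hshift⟩ := mul_ne_zero_iff.mp hz'
  rw [← hc, ← expCoord_add, hc] at hshift
  rw [Gfun_eq_div hp hq hz, Gfun_eq_div hp hq hshift, Rfun_eq_qTheta hp hp0, qTheta, expCoord_add,
    expCoord_sub, hc, hden, hnum]
  rw [expCoord_add, hc] at hshift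
  rw [← mul_div_assoc, mul_assoc, mul_div_mul_left _ _ hpoch]

end EllipticGamma

section Generic

variable {X : Type*} [TopologicalSpace X] {P Q : X → Prop}

/-- `P` holds on a dense open set, which is the sense in which an identity of meromorphic functions
holds. -/
def HoldsGenerically (P : X → Prop) : Prop := ∃ U : Set X, IsOpen U ∧ Dense U ∧ ∀ x ∈ U, P x

lemma HoldsGenerically.mono (hP : HoldsGenerically P) (hPQ : ∀ x, P x → Q x) :
    HoldsGenerically Q :=
  hP.imp fun _ hU => ⟨hU.1, hU.2.1, fun x hx => hPQ x (hU.2.2 x hx)⟩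

lemma HoldsGenerically.and (hP : HoldsGenerically P) (hQ : HoldsGenerically Q) :
    HoldsGenerically fun x => P x ∧ Q x := by
  obtain ⟨U, hUopen, hUdense, hU⟩ := hP
  obtain ⟨V, hVopen, hVdense, hV⟩ := hQ
  exact ⟨U ∩ V, hUopen.inter hVopen, hUdense.inter_of_isOpen_left hVdense hUopen,
    fun x hx => ⟨hU x hx.1, hV x hx.2⟩⟩

lemma holdsGenerically_ne_zero {E F : Type*} [NormedAddCommGroup E] [NormedSpace ℂ E]
    [NormedAddCommGroup F] [NormedSpace ℂ F] [CompleteSpace F] {f : E → F}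
    (hf : Differentiable ℂ f) {x₀ : E} (hx₀ : f x₀ ≠ 0) : HoldsGenerically fun x => f x ≠ 0 := by
  refine ⟨{x | f x ≠ 0}, isOpen_ne_fun hf.continuous continuous_const,
    fun x => mem_closure_iff_frequently.mpr fun hzero => hx₀ ?_, fun _ => id⟩
  -- The identity theorem in one variable, on the complex line through `x` and `x₀`.
  let line : ℂ → E := AffineMap.lineMap x x₀
  have hline : Differentiable ℂ line := by
    unfold line
    fun_prop
  have htendsto : Tendsto line (nhds 0) (nhds x) := by
    simpa [line] using hline.continuous.tendsto 0
  have hf_line : f ∘ line = 0 :=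
    AnalyticOnNhd.eq_of_eventuallyEq (fun t _ => (hf.comp hline).analyticAt t)
      analyticOnNhd_const (htendsto.eventually (hzero.mono fun _ => not_not.mp))
  simpa [line] using congrFun hf_line 1

end Generic

section KernelFunction

variable {a b γ y z : ℂ} {l : Fin 4 → ℂ}

lemma fδ_true_eq_div (a b : ℂ) (l : Fin 4 → ℂ) (z : ℂ) : fδ a b true l z =
    (∏ n, Rfun (nome a) (z + l n + I * b / 4)) / Rfun (nome a) (2 * z - I * a / 2) := rfl

lemma Kker_eq_mul (a b γ z y : ℂ) : Kker a b γ z y =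
    Gfun (nome a) (nome b) (z + y - γ) * Gfun (nome a) (nome b) (z - y - γ) *
    Gfun (nome a) (nome b) (-z + y - γ) * Gfun (nome a) (nome b) (-z - y - γ) := rfl

lemma Kker_comm (a b γ z y : ℂ) : Kker a b γ z y = Kker b a γ z y := by
  simp only [Kker_eq_mul, Gfun_comm (nome a)]

lemma Kker_swap (a b γ z y : ℂ) : Kker a b γ z y = Kker a b γ y z := by
  simp only [Kker]
  ring_nf

lemma Kker_neg_left (a b γ z y : ℂ) : Kker a b γ (-z) y = Kker a b γ z y := by
  simp only [Kker]
  ring_nf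

/-- The denominator of `Gfun (nome a) (nome b) x`, as a function of `x`. -/
def gammaDenom (a b x : ℂ) : ℂ := gammaProd (nome a) (nome b) (expCoord x)

lemma Kker_add_half_period (ha : 0 < a.re) (hb : 0 < b.re)
    (hadd : gammaDenom a b (z + y - γ - I * b / 2) ≠ 0)
    (hsub : gammaDenom a b (z - y - γ - I * b / 2) ≠ 0) :
    Kker a b γ (z + I * b / 2) y =
      Rfun (nome a) (z + y - γ) * Rfun (nome a) (z - y - γ) * Kker a b (γ + I * b / 2) z y := by
  have hshift {x : ℂ} := Gfun_add_half_period (z := x) (norm_nome_lt_one ha) (nome_ne_zero a)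
    (norm_nome_lt_one hb) (expCoord_I_mul_div_two b)
  have hadd_eq : z + I * b / 2 + y - γ = z + y - γ + I * b / 2 := by ring
  have hsub_eq : z + I * b / 2 - y - γ = z - y - γ + I * b / 2 := by ring
  rw [Kker_eq_mul, hadd_eq, hsub_eq, hshift hadd, hshift hsub, Kker_eq_mul]
  ring_nf

/-- The parameters `t_n = p e^{2πi(l_n + ib/4)}`, with `p = nome a`, for which the numerator of
`fδ a b true l z` is `∏ n, θ(t_n e^{2πiz})`. -/
def thetaParam (a b : ℂ) (l : Fin 4 → ℂ) (n : Fin 4) : ℂ := nome a * expCoord (l n + I * b / 4)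

lemma Rfun_two_mul_sub (ha : 0 < a.re) (z : ℂ) :
    Rfun (nome a) (2 * z - I * a / 2) = qTheta (nome a ^ 2) (expCoord z ^ 2) := by
  rw [Rfun_eq_qTheta (norm_nome_lt_one ha) (nome_ne_zero a), expCoord_sub, expCoord_I_mul_div_two,
    two_mul, expCoord_add, mul_div_cancel₀ _ (nome_ne_zero a), ← sq]

lemma Rfun_add (ha : 0 < a.re) (γ x : ℂ) : Rfun (nome a) (γ + x) =
    qTheta (nome a ^ 2) (nome a ^ 2 * (expCoord γ / nome a) * expCoord x) := by
  have hp0 := nome_ne_zero a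
  rw [Rfun_eq_qTheta (norm_nome_lt_one ha) hp0, expCoord_add]
  congr 1
  field_simp

lemma fδ_true_mul_Rfun (ha : 0 < a.re) (b γ z y : ℂ) (l : Fin 4 → ℂ) :
    fδ a b true l z * (Rfun (nome a) (z + y - γ) * Rfun (nome a) (z - y - γ)) =
      kernelTerm (nome a ^ 2) (thetaParam a b l) (expCoord γ / nome a) (expCoord y)
        (expCoord z) := by
  have hp0 := nome_ne_zero a
  have hy := expCoord_ne_zero y
  have hγ := expCoord_ne_zero γ
  rw [fδ_true_eq_div, Rfun_two_mul_sub ha, kernelTerm, div_mul_eq_mul_div]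
  simp only [thetaParam, Rfun_eq_qTheta (norm_nome_lt_one ha) hp0, expCoord_add, expCoord_sub]
  congr 2
  · exact Finset.prod_congr rfl fun n _ => by ring_nf
  · congr 2 <;> field_simp

lemma prod_thetaParam (hγ : expCoord (2 * γ) = expCoord ((∑ n, l n) + I * (a + b))) :
    ∏ n, thetaParam a b l n = (nome a ^ 2) ^ 2 * (expCoord γ / nome a) ^ 2 := by
  have hp0 := nome_ne_zero a
  have hperiod : I * (a + b) = I * a / 2 + I * a / 2 + ∑ _n : Fin 4, I * b / 4 := by
    rw [Finset.sum_const, Finset.card_univ, Fintype.card_fin, nsmul_eq_mul]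
    ring
  simp only [hperiod, two_mul, expCoord_add, expCoord_sum, expCoord_I_mul_div_two] at hγ
  simp only [thetaParam, expCoord_add, Finset.prod_mul_distrib, Finset.prod_const,
    Finset.card_univ, Fintype.card_fin] at hγ ⊢
  field_simp
  linear_combination -hγ

lemma thetaParam_dual (l : Fin 4 → ℂ) :
    thetaParam a b (fun n => -l n + γ - I * ((a + b) / 2)) =
      fun n => nome a ^ 2 * (expCoord γ / nome a) / thetaParam a b l n := by
  funext n
  have hp0 := nome_ne_zero a
  have hexponent : -l n + γ - I * ((a + b) / 2) + I * b / 4 =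
      γ - I * a / 2 - (l n + I * b / 4) := by ring
  simp only [thetaParam, hexponent, expCoord_sub _ (l n + I * b / 4), expCoord_sub γ,
    expCoord_I_mul_div_two]
  field_simp

lemma fδ_true_mul_Rfun_add (ha : 0 < a.re) (b γ z y : ℂ) (l : Fin 4 → ℂ) :
    fδ a b true l z * (Rfun (nome a) (z + y - γ) * Rfun (nome a) (z - y - γ)) +
      fδ a b true l (-z) * (Rfun (nome a) (-z + y - γ) * Rfun (nome a) (-z - y - γ)) =
      kernelSum (nome a ^ 2) (thetaParam a b l) (expCoord γ / nome a) (expCoord y)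
        (expCoord z) := by
  rw [fδ_true_mul_Rfun ha, fδ_true_mul_Rfun ha, kernelSum, expCoord_neg]

/-- The points `(z, y)` at which `Kker_add_half_period` applies to all four half-period shifts
`(z ± I * b / 2, y)` and `(z, y ± I * b / 2)` of `Kker a b γ`. -/
structure IsShiftRegular (a b γ z y : ℂ) : Prop where
  add : gammaDenom a b (z + y - γ - I * b / 2) ≠ 0
  sub : gammaDenom a b (z - y - γ - I * b / 2) ≠ 0
  neg_add : gammaDenom a b (-z + y - γ - I * b / 2) ≠ 0
  neg_sub : gammaDenom a b (-z - y - γ - I * b / 2) ≠ 0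

lemma IsShiftRegular.symm (h : IsShiftRegular a b γ z y) : IsShiftRegular a b γ y z where
  add := add_comm z y ▸ h.add
  sub := neg_add_eq_sub z y ▸ h.neg_add
  neg_add := (neg_add_eq_sub y z).symm ▸ h.sub
  neg_sub := neg_sub_comm z y ▸ h.neg_sub

lemma fδ_true_mul_Kker_add (ha : 0 < a.re) (hb : 0 < b.re) (hreg : IsShiftRegular a b γ z y)
    (l : Fin 4 → ℂ) :
    fδ a b true l z * Kker a b γ (z + I * b / 2) y +
        fδ a b true l (-z) * Kker a b γ (z - I * b / 2) y =
      kernelSum (nome a ^ 2) (thetaParam a b l) (expCoord γ / nome a) (expCoord y)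
        (expCoord z) * Kker a b (γ + I * b / 2) z y := by
  have hneg : Kker a b γ (z - I * b / 2) y = Kker a b γ (-z + I * b / 2) y := by
    rw [← Kker_neg_left, neg_sub, sub_eq_neg_add]
  rw [hneg, Kker_add_half_period ha hb hreg.add hreg.sub,
    Kker_add_half_period ha hb hreg.neg_add hreg.neg_sub, Kker_neg_left,
    ← fδ_true_mul_Rfun_add ha]
  ring

lemma kernel_identity_true (ha : 0 < a.re) (hb : 0 < b.re)
    (hγ : expCoord (2 * γ) = expCoord ((∑ n, l n) + I * (a + b)))
    (hgen : IsGeneric (nome a ^ 2) (expCoord γ / nome a) (expCoord y) (expCoord z))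
    (hreg : IsShiftRegular a b γ z y) :
    fδ a b true l z * Kker a b γ (z + I * b / 2) y +
        fδ a b true l (-z) * Kker a b γ (z - I * b / 2) y =
      fδ a b true (fun n => -l n + γ - I * ((a + b) / 2)) y * Kker a b γ z (y + I * b / 2) +
        fδ a b true (fun n => -l n + γ - I * ((a + b) / 2)) (-y) *
          Kker a b γ z (y - I * b / 2) := by
  have hp0 := nome_ne_zero a
  rw [fδ_true_mul_Kker_add ha hb hreg, Kker_swap a b γ z, Kker_swap a b γ z,
    fδ_true_mul_Kker_add ha hb hreg.symm, thetaParam_dual, Kker_swap a b _ y,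
    kernelSum_eq_kernelSum_dual (norm_sq_lt_one (norm_nome_lt_one ha)) (pow_ne_zero 2 hp0)
      (div_ne_zero (expCoord_ne_zero γ) hp0) hgen (prod_thetaParam hγ)]

lemma holdsGenerically_isShiftRegular (ha : 0 < a.re) (hb : 0 < b.re) (γ : ℂ) :
    HoldsGenerically fun x : ℂ × ℂ => IsShiftRegular a b γ x.1 x.2 := by
  have hdiff : Differentiable ℂ (gammaDenom a b) :=
    (differentiable_gammaProd (norm_nome_lt_one ha) (norm_nome_lt_one hb)).comp
      differentiable_expCoord
  have hzero : gammaDenom a b 0 ≠ 0 := by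
    rw [gammaDenom, expCoord_zero]
    exact gammaProd_one_ne_zero (norm_nome_lt_one ha) (norm_nome_lt_one hb)
  have hgen {L : ℂ × ℂ → ℂ} (hL : Differentiable ℂ L) {x₀ : ℂ × ℂ} (hx₀ : L x₀ = 0) :
      HoldsGenerically fun x => gammaDenom a b (L x) ≠ 0 :=
    holdsGenerically_ne_zero (hdiff.comp hL) ((congrArg (gammaDenom a b) hx₀).trans_ne hzero)
  have hadd := hgen (L := fun x => x.1 + x.2 - γ - I * b / 2) (by fun_prop)
    (x₀ := (γ + I * b / 2, 0)) (by ring)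
  have hsub := hgen (L := fun x => x.1 - x.2 - γ - I * b / 2) (by fun_prop)
    (x₀ := (γ + I * b / 2, 0)) (by ring)
  have hneg_add := hgen (L := fun x => -x.1 + x.2 - γ - I * b / 2) (by fun_prop)
    (x₀ := (0, γ + I * b / 2)) (by ring)
  have hneg_sub := hgen (L := fun x => -x.1 - x.2 - γ - I * b / 2) (by fun_prop)
    (x₀ := (-(γ + I * b / 2), 0)) (by ring)
  exact (((hadd.and hsub).and hneg_add).and hneg_sub).mono
    fun x ⟨⟨⟨hadd, hsub⟩, hneg_add⟩, hneg_sub⟩ => ⟨hadd, hsub, hneg_add, hneg_sub⟩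

lemma holdsGenerically_isGeneric (ha : 0 < a.re) (γ : ℂ) :
    HoldsGenerically fun x : ℂ × ℂ =>
      IsGeneric (nome a ^ 2) (expCoord γ / nome a) (expCoord x.2) (expCoord x.1) := by
  have hR {L : ℂ × ℂ → ℂ} (hL : Differentiable ℂ L) {x₀ : ℂ × ℂ} (hx₀ : L x₀ = 0) :
      HoldsGenerically fun x => Rfun (nome a) (L x) ≠ 0 :=
    holdsGenerically_ne_zero
      ((differentiable_Rfun (norm_nome_lt_one ha) (nome_ne_zero a)).comp hL) <|
      (congrArg (Rfun (nome a)) hx₀).trans_ne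
        (Rfun_zero_ne_zero (norm_nome_lt_one ha) (nome_ne_zero a))
  have hleft := hR (L := fun x => 2 * x.2 - I * a / 2) (by fun_prop)
    (x₀ := (0, I * a / 4)) (by ring)
  have hright := hR (L := fun x => 2 * x.1 - I * a / 2) (by fun_prop)
    (x₀ := (I * a / 4, 0)) (by ring)
  have hmul_mul := hR (L := fun x => γ + (x.2 + x.1)) (by fun_prop)
    (x₀ := (-γ, 0)) (by ring)
  have hmul_div := hR (L := fun x => γ + (x.2 - x.1)) (by fun_prop)
    (x₀ := (γ, 0)) (by ring)
  have hdiv_mul := hR (L := fun x => γ + (x.1 - x.2)) (by fun_prop)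
    (x₀ := (-γ, 0)) (by ring)
  have hdiv_div := hR (L := fun x => γ + -(x.2 + x.1)) (by fun_prop)
    (x₀ := (γ, 0)) (by ring)
  simp only [Rfun_two_mul_sub ha, Rfun_add ha, expCoord_neg, expCoord_add, expCoord_sub,
    ← div_eq_mul_inv] at hleft hright hmul_mul hmul_div hdiv_mul hdiv_div
  exact (((((hleft.and hright).and hmul_mul).and hmul_div).and hdiv_mul).and hdiv_div).mono
    fun x ⟨⟨⟨⟨⟨hleft, hright⟩, hmul_mul⟩, hmul_div⟩, hdiv_mul⟩, hdiv_div⟩ =>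
      ⟨expCoord_ne_zero _, expCoord_ne_zero _, hleft, hright, hmul_mul, hmul_div, hdiv_mul,
        hdiv_div⟩

lemma holdsGenerically_kernel_identity_true (ha : 0 < a.re) (hb : 0 < b.re)
    (hγ : exp (4 * Real.pi * I * γ) =
      exp (2 * Real.pi * I * ((∑ n, l n) + 2 * I * ((a + b) / 2)))) :
    HoldsGenerically fun x : ℂ × ℂ =>
      fδ a b true l x.1 * Kker a b γ (x.1 + I * b / 2) x.2 +
          fδ a b true l (-x.1) * Kker a b γ (x.1 - I * b / 2) x.2 =
        fδ a b true (fun n => -l n + γ - I * ((a + b) / 2)) x.2 *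
            Kker a b γ x.1 (x.2 + I * b / 2) +
          fδ a b true (fun n => -l n + γ - I * ((a + b) / 2)) (-x.2) *
            Kker a b γ x.1 (x.2 - I * b / 2) := by
  have hbalance : expCoord (2 * γ) = expCoord ((∑ n, l n) + I * (a + b)) := by
    rw [expCoord, expCoord]
    convert hγ using 2 <;> ring
  exact ((holdsGenerically_isGeneric ha γ).and (holdsGenerically_isShiftRegular ha hb γ)).mono
    fun _ ⟨hgen, hreg⟩ => kernel_identity_true ha hb hbalance hgen hreg

end KernelFunction

/-- Theorem 4.1: the kernel identity
`A_{R,δ}(l;z)K(γ;z,y) = A_{R,δ}(k;y)K(γ;z,y)` for `δ = +,−`, where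
`k_n = −l_n + γ − ia` and `exp(4πiγ) = exp(2πi(∑ l_n + 2ia))`, as an identity of
meromorphic functions of `(z,y)` (i.e. valid on a dense open set). -/
theorem statement11 (ap am : ℂ) (hap : 0 < ap.re) (ham : 0 < am.re) (γ : ℂ)
    (l : Fin 4 → ℂ)
    (hγ : Complex.exp (4 * Real.pi * I * γ) =
      Complex.exp (2 * Real.pi * I * ((∑ n, l n) + 2 * I * ((ap + am) / 2)))) :
    ∀ δ : Bool, ∃ U : Set (ℂ × ℂ), IsOpen U ∧ Dense U ∧ ∀ p ∈ U,
      fδ ap am δ l p.1 * Kker ap am γ (p.1 + I * aof ap am (!δ) / 2) p.2 +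
        fδ ap am δ l (-p.1) * Kker ap am γ (p.1 - I * aof ap am (!δ) / 2) p.2 =
      fδ ap am δ (fun n => -l n + γ - I * ((ap + am) / 2)) p.2 *
          Kker ap am γ p.1 (p.2 + I * aof ap am (!δ) / 2) +
        fδ ap am δ (fun n => -l n + γ - I * ((ap + am) / 2)) (-p.2) *
          Kker ap am γ p.1 (p.2 - I * aof ap am (!δ) / 2) := by
  rintro (_ | _)
  · have hswap (l : Fin 4 → ℂ) (z : ℂ) : fδ am ap true l z = fδ ap am false l z := rfl
    have hidentity := holdsGenerically_kernel_identity_true ham hap (add_comm ap am ▸ hγ)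
    simp only [hswap, Kker_comm am ap, add_comm am ap] at hidentity
    exact hidentity
  · exact holdsGenerically_kernel_identity_true hap ham hγ
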